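/- In a finite partial Sherk plane in which some line is incident only with thick points, all points are incident with the same number of lines. -/

import Mathlib

/-!
Perpendicularity induces a fixed-point-free involution on the lines through each point, because no
line is perpendicular to itself (`not_perp_self`). For two non-perpendicular lines `l`, `m`, sending
a point of `l` to the foot of a perpendicular from it to `m` is injective; by finiteness and
symmetry it is bijective. Hence no point of `l` is a pole of `m`; in other words, all lines through
a pole of `m` are perpendicular to `m` (`perp_of_two`).

Let `P ≠ Q` lie on `j` with `Q` thick, and let `a`, `b` be the perpendiculars to `j` at `P`, `Q`.
Unless `P` is a pole of `b` or `Q` is a pole of `a`, perpendicularity is a bijection between the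
pencils of `P` and `Q`. Moreover, if `P` is a pole of `b` then all lines through the thick point
`Q` are perpendicular to `a` (`perp_of_pole`). So the pencils have equal size as soon as `Q` is not
a pole of `a` (`card_eq_of_not_pole`). In the remaining case, when `P` is thick too, `P` and `Q`
belong to a triangle `P`, `Q`, `R = a ∩ b` in which all lines through `P` are perpendicular to `b`
and all lines through `Q` to `a`. A further line `q` through `Q` meets `a` in a point `A`, and
the previous case applies to the pairs `(A, P)` and `(R, A)`; symmetrically for `Q`. Thus `P`, `Q`
and `R` have pencils of equal size (`card_eq_triangle`), and joined thick points always have equal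
pencils (`card_eq_of_thick`).

If all points of `l` are thick, then an arbitrary point `P` off `l` is joined to a point `F` of `l`
by a perpendicular. Either `P` is thick, or its only two lines are perpendicular to `l` and `P` is
the third vertex `R` of such a triangle.
-/

structure PartialSherkPlane (Point Line : Type*) where
  Inc : Point → Line → Prop
  Perp : Line → Line → Prop
  aStar : ∀ P Q : Point, P ≠ Q → ∀ l m : Line,
    Inc P l → Inc Q l → Inc P m → Inc Q m → l = m
  b1 : ∀ l m : Line, Perp l m → Perp m l
  b2 : ∀ l m : Line, Perp l m → ∃ P : Point, Inc P l ∧ Inc P m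
  b3 : ∀ (P : Point) (l : Line), ∃ m : Line, Inc P m ∧ Perp m l
  b4 : ∀ (P : Point) (l : Line), Inc P l → ∃! m : Line, Inc P m ∧ Perp m l
  b5 : ∃ x y z : Line, Perp x y ∧ ¬ Perp x z ∧ ¬ Perp y z ∧
    ¬ ∃ P : Point, Inc P x ∧ Inc P y ∧ Inc P z

/-- `P` is a pole of `l`: `P` is not on `l` and at least two distinct
perpendiculars to `l` pass through `P`. -/
def PartialSherkPlane.IsPole {Point Line : Type*} (G : PartialSherkPlane Point Line)
    (P : Point) (l : Line) : Prop :=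
  ¬ G.Inc P l ∧ ∃ g h : Line, g ≠ h ∧ G.Inc P g ∧ G.Inc P h ∧ G.Perp g l ∧ G.Perp h l

namespace PartialSherkPlane

variable {Point Line : Type*} (G : PartialSherkPlane Point Line)

/-- `P` lies on at least three lines. -/
def Thick (P : Point) : Prop := 3 ≤ Nat.card {m : Line // G.Inc P m}

/-! ### Uniqueness of perpendiculars and irreflexivity -/

lemma perp_unique {P : Point} {l m n : Line} (hl : G.Inc P l) (hm : G.Inc P m) (hn : G.Inc P n)
    (hml : G.Perp m l) (hnl : G.Perp n l) : m = n :=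
  (G.b4 P l hl).unique ⟨hm, hml⟩ ⟨hn, hnl⟩

/-- If `l ⊥ l` then `l` is its only perpendicular, so `l` passes through every point. In B5, the
perpendicular from `x ∩ y` to `z` then has to be `l`, which forces `z = l`. -/
lemma not_perp_self (l : Line) : ¬ G.Perp l l := by
  intro hl
  have only : ∀ m, G.Perp m l → m = l := by
    intro m hm
    obtain ⟨Q, hQm, hQl⟩ := G.b2 m l hm
    exact G.perp_unique hQl hQm hQl hm hl
  have all : ∀ X, G.Inc X l := by
    intro X
    obtain ⟨m, hX, hm⟩ := G.b3 X l
    rwa [only m hm] at hX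
  obtain ⟨x, y, z, hxy, -, -, hc⟩ := G.b5
  obtain ⟨P, hPx, hPy⟩ := G.b2 x y hxy
  obtain ⟨m, hPm, hm⟩ := G.b3 P z
  obtain ⟨Q, hQm, hQz⟩ := G.b2 m z hm
  have hPQ : P ≠ Q := by
    rintro rfl
    exact hc ⟨P, hPx, hPy, hQz⟩
  have hml := G.aStar P Q hPQ m l hPm hQm (all P) (all Q)
  subst hml
  have := only z (G.b1 _ _ hm)
  subst this
  exact hc ⟨P, hPx, hPy, all P⟩

lemma ne_of_perp {l m : Line} (h : G.Perp l m) : l ≠ m := by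
  rintro rfl
  exact G.not_perp_self l h

lemma eq_of_inc {P Q : Point} {l m : Line} (hlm : l ≠ m) (hPl : G.Inc P l) (hQl : G.Inc Q l)
    (hPm : G.Inc P m) (hQm : G.Inc Q m) : P = Q := by
  by_contra h
  exact hlm (G.aStar P Q h l m hPl hQl hPm hQm)

/-! ### Non-perpendicular lines and poles -/

/-- Two points of `l` with the same foot on `m` share their perpendicular, which differs from `l`
when `l` and `m` are not perpendicular; so the points coincide. -/
lemma exists_foot_map {l m : Line} (hp : ¬ G.Perp l m) :
    ∃ f : {X // G.Inc X l} → {Y // G.Inc Y m}, Function.Injective f ∧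
      ∀ X, ∃ n, G.Inc X.1 n ∧ G.Perp n m ∧ G.Inc (f X).1 n := by
  have h : ∀ X : {X // G.Inc X l}, ∃ Y : {Y // G.Inc Y m},
      ∃ n, G.Inc X.1 n ∧ G.Perp n m ∧ G.Inc Y.1 n := by
    intro X
    obtain ⟨n, hX, hn⟩ := G.b3 X.1 m
    obtain ⟨Y, hYn, hYm⟩ := G.b2 n m hn
    exact ⟨⟨Y, hYm⟩, n, hX, hn, hYn⟩
  choose f hf using h
  refine ⟨f, ?_, hf⟩
  intro X X' hXX
  obtain ⟨n, hXn, hn, hfn⟩ := hf X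
  obtain ⟨n', hXn', hn', hfn'⟩ := hf X'
  rw [← hXX] at hfn'
  have e := G.perp_unique (f X).2 hfn hfn' hn hn'
  subst e
  have hne : n ≠ l := by
    rintro rfl
    exact hp hn
  exact Subtype.ext (G.eq_of_inc hne hXn hXn' X.2 X'.2)

/-- The foot maps `l → m` and `m → l` are injective, so by finiteness both are bijective, and each
perpendicular to `m` is the one `ν` picks at some point of `l`. -/
lemma exists_perp_map [Finite Point] {l m : Line} (hp : ¬ G.Perp l m) :
    ∃ ν : {X // G.Inc X l} → Line, (∀ X, G.Inc X.1 (ν X)) ∧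
      ∀ n, G.Perp n m → ∃ X, ν X = n := by
  obtain ⟨f, hf, hfn⟩ := G.exists_foot_map hp
  obtain ⟨f', hf', -⟩ := G.exists_foot_map (fun h => hp (G.b1 m l h))
  have hbij := hf.bijective_of_nat_card_le (Nat.card_le_card_of_injective f' hf')
  choose ν hν using hfn
  refine ⟨ν, fun X => (hν X).1, fun n hn => ?_⟩
  obtain ⟨Y, hYn, hYm⟩ := G.b2 n m hn
  obtain ⟨X, hX⟩ := hbij.2 ⟨Y, hYm⟩
  have h := hν X
  rw [hX] at h
  exact ⟨X, G.perp_unique hYm h.2.2 hYn h.2.1 hn⟩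

/-- A line through a pole of `m` is perpendicular to `m`. -/
lemma perp_of_two [Finite Point] {X : Point} {l m g h : Line} (hgh : g ≠ h)
    (hXl : G.Inc X l) (hXg : G.Inc X g) (hXh : G.Inc X h) (hg : G.Perp g m) (hh : G.Perp h m) :
    G.Perp l m := by
  by_contra hp
  obtain ⟨ν, hν, hs⟩ := G.exists_perp_map hp
  have key : ∀ n, G.Inc X n → G.Perp n m → ν ⟨X, hXl⟩ = n := by
    intro n hXn hn
    obtain ⟨Y, rfl⟩ := hs n hn
    have hne : ν Y ≠ l := fun e => hp (e ▸ hn)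
    have : Y = ⟨X, hXl⟩ := Subtype.ext (G.eq_of_inc hne (hν Y) hXn Y.2 hXl)
    rw [this]
  exact hgh ((key g hXg hg).symm.trans (key h hXh hh))

/-! ### Thick points -/

lemma Thick.exists_third {G : PartialSherkPlane Point Line} {P : Point} (h : G.Thick P)
    (a b : Line) : ∃ m, G.Inc P m ∧ m ≠ a ∧ m ≠ b := by
  classical
  by_contra! hc
  have hsub : {m | G.Inc P m} ⊆ (({a, b} : Finset Line) : Set Line) := by
    intro m hm
    by_cases hma : m = a
    · simp [hma]
    · simp [hc m hm hma]
  have h1 : Nat.card {m // G.Inc P m} ≤ 2 := by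
    have := Set.ncard_le_ncard hsub (Finset.finite_toSet _)
    rw [Set.ncard_coe_finset] at this
    exact this.trans Finset.card_le_two
  unfold Thick at h
  omega

lemma eq_or_eq_of_not_thick [Finite Line] {P : Point} (h : ¬ G.Thick P) {a b m : Line} (hab : a ≠ b)
    (ha : G.Inc P a) (hb : G.Inc P b) (hm : G.Inc P m) : m = a ∨ m = b := by
  classical
  by_contra! hc
  apply h
  have hsub : (({m, a, b} : Finset Line) : Set Line) ⊆ {m | G.Inc P m} := by
    intro x hx
    simp only [Finset.coe_insert, Finset.coe_singleton, Set.mem_insert_iff,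
      Set.mem_singleton_iff] at hx
    rcases hx with rfl | rfl | rfl <;> assumption
  have := Set.ncard_le_ncard hsub (Set.toFinite _)
  rw [Set.ncard_coe_finset, Finset.card_eq_three.2 ⟨m, a, b, hc.1, hc.2, hab, rfl⟩] at this
  exact this

/-! ### Poles with a thick foot -/

/-- Let `P` be a pole of `l` and let `g` be a perpendicular from `P` with thick foot `F`. For a line
`m ≠ g, l` through `F`, any perpendicular from `P` to `m` passes through the pole `P`, hence is
perpendicular to `l`; then `F` is a pole of it, so `g` is perpendicular to it as well and it equals
`n`. -/
lemma perp_of_pole [Finite Point] {P F : Point} {l g h n : Line} (hPl : ¬ G.Inc P l)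
    (hgh : g ≠ h) (hPg : G.Inc P g) (hPh : G.Inc P h) (hg : G.Perp g l) (hh : G.Perp h l)
    (hFg : G.Inc F g) (hFl : G.Inc F l) (hPn : G.Inc P n) (hn : G.Perp n g) (hF : G.Thick F)
    {m : Line} (hFm : G.Inc F m) : G.Perp m n := by
  have main : ∀ m, G.Inc F m → m ≠ g → m ≠ l → G.Perp n l ∧ G.Perp m n := by
    intro m hFm hmg hml
    obtain ⟨x, hPx, hx⟩ := G.b3 P m
    have hxl : G.Perp x l := G.perp_of_two hgh hPx hPg hPh hg hh
    have hxg : x ≠ g := by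
      rintro rfl
      exact hml (G.perp_unique hFg hFm hFl (G.b1 _ _ hx) (G.b1 _ _ hg))
    have hgx : G.Perp g x :=
      G.perp_of_two hml hFg hFm hFl (G.b1 _ _ hx) (G.b1 _ _ hxl)
    have e : x = n := G.perp_unique hPg hPx hPn (G.b1 _ _ hgx) hn
    subst e
    exact ⟨hxl, G.b1 _ _ hx⟩
  by_cases hmg : m = g
  · subst hmg
    exact G.b1 _ _ hn
  by_cases hml : m = l
  · subst hml
    obtain ⟨m', h1, h2, h3⟩ := hF.exists_third g m
    exact G.b1 _ _ (main m' h1 h2 h3).1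
  · exact (main m hFm hmg hml).2

/-! ### Comparing pencils -/

/-- If neither of `P`, `Q` is a pole of a line through the other, perpendicularity is a bijection
between their pencils. -/
lemma card_eq_of_unique {P Q : Point}
    (h1 : ∀ g u v, G.Inc P g → G.Inc Q u → G.Inc Q v → G.Perp u g → G.Perp v g → u = v)
    (h2 : ∀ g u v, G.Inc Q g → G.Inc P u → G.Inc P v → G.Perp u g → G.Perp v g → u = v) :
    Nat.card {l // G.Inc P l} = Nat.card {l // G.Inc Q l} := by
  choose p hp hpp using G.b3
  refine Nat.card_congr ⟨fun l => ⟨p Q l.1, hp _ _⟩, fun l => ⟨p P l.1, hp _ _⟩, ?_, ?_⟩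
  · intro l
    exact Subtype.ext (h2 (p Q l.1) _ _ (hp _ _) (hp _ _) l.2 (hpp _ _) (G.b1 _ _ (hpp _ _)))
  · intro l
    exact Subtype.ext (h1 (p P l.1) _ _ (hp _ _) (hp _ _) l.2 (hpp _ _) (G.b1 _ _ (hpp _ _)))

/-- Here `c` certifies that `Q` is not a pole of `a`. -/
lemma card_eq_of_not_pole [Finite Point] {P Q : Point} {j a c : Line} (hPQ : P ≠ Q)
    (hQ : G.Thick Q) (hPj : G.Inc P j) (hQj : G.Inc Q j) (hPa : G.Inc P a) (ha : G.Perp a j)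
    (hQc : G.Inc Q c) (hc : ¬ G.Perp c a) :
    Nat.card {l // G.Inc P l} = Nat.card {l // G.Inc Q l} := by
  apply G.card_eq_of_unique
  · intro g u v hPg hQu hQv hu hv
    by_contra huv
    have hj : G.Perp j g := G.perp_of_two huv hQj hQu hQv hu hv
    have e : g = a := G.perp_unique hPj hPg hPa (G.b1 _ _ hj) ha
    subst e
    exact hc (G.perp_of_two huv hQc hQu hQv hu hv)
  · intro g u v hQg hPu hPv hu hv
    by_contra huv
    have hj : G.Perp j g := G.perp_of_two huv hPj hPu hPv hu hv
    have hPg : ¬ G.Inc P g := fun h =>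
      G.ne_of_perp hj (G.aStar P Q hPQ j g hPj hQj h hQg)
    obtain ⟨h, hPh, hh, hjh⟩ : ∃ h, G.Inc P h ∧ G.Perp h g ∧ j ≠ h := by
      by_cases hju : j = u
      · exact ⟨v, hPv, hv, hju ▸ huv⟩
      · exact ⟨u, hPu, hu, hju⟩
    exact hc (G.perp_of_pole hPg hjh hPj hPh hj hh hQj hQg hPa ha hQ hQc)

/-- A triangle with two thick vertices `P`, `Q` whose pencils are perpendicular to the sides
opposite to them. Nothing is assumed about the number of lines through `R`. -/
lemma card_eq_triangle [Finite Point] {P Q R : Point} {j a b : Line} (hPQ : P ≠ Q)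
    (hP : G.Thick P) (hQ : G.Thick Q) (hPj : G.Inc P j) (hQj : G.Inc Q j)
    (hPa : G.Inc P a) (ha : G.Perp a j) (hQb : G.Inc Q b) (hb : G.Perp b j)
    (hPb : ∀ m, G.Inc P m → G.Perp m b) (hQa : ∀ q, G.Inc Q q → G.Perp q a)
    (hRa : G.Inc R a) (hRb : G.Inc R b) :
    Nat.card {l // G.Inc R l} = Nat.card {l // G.Inc P l} ∧
      Nat.card {l // G.Inc R l} = Nat.card {l // G.Inc Q l} := by
  have half : ∀ (P Q : Point) (a b : Line), P ≠ Q → G.Thick P → G.Thick Q → G.Inc P j →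
      G.Inc Q j → G.Inc P a → G.Perp a j → G.Inc Q b → G.Perp b j →
      (∀ q, G.Inc Q q → G.Perp q a) → G.Inc R a → G.Inc R b →
      Nat.card {l // G.Inc R l} = Nat.card {l // G.Inc P l} := by
    intro P Q a b hPQ hP hQ hPj hQj hPa ha hQb hb hQa hRa hRb
    obtain ⟨q, hQq, hqj, hqb⟩ := hQ.exists_third j b
    have hqa := hQa q hQq
    obtain ⟨A, hAq, hAa⟩ := G.b2 q a hqa
    have hja : j ≠ a := (G.ne_of_perp ha).symm
    have hQna : ¬ G.Inc Q a := fun h => hja (G.aStar P Q hPQ j a hPj hQj hPa h)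
    have hAP : A ≠ P := by
      rintro rfl
      exact hqj (G.aStar A Q hPQ q j hAq hQq hPj hQj)
    have hRA : R ≠ A := by
      rintro rfl
      have hRQ : R ≠ Q := by
        rintro rfl
        exact hQna hRa
      exact hqb (G.aStar R Q hRQ q b hAq hQq hRb hQb)
    have hjq : ¬ G.Perp j q := fun h =>
      hqb (G.perp_unique hQj hQq hQb (G.b1 _ _ h) hb)
    have hqb' : ¬ G.Perp q b := fun h =>
      hqj (G.perp_unique hQb hQq hQj h (G.b1 _ _ hb))
    have e1 := G.card_eq_of_not_pole hAP hP hAa hPa hAq hqa hPj hjq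
    have hA : G.Thick A := by
      unfold Thick
      rw [e1]
      exact hP
    exact (G.card_eq_of_not_pole hRA hA hRa hAa hRb (hQa b hQb) hAq hqb').trans e1
  exact ⟨half P Q a b hPQ hP hQ hPj hQj hPa ha hQb hb hQa hRa hRb,
    half Q P b a hPQ.symm hQ hP hQj hPj hQb hb hPa ha hPb hRb hRa⟩

lemma card_eq_of_thick [Finite Point] {P Q : Point} {j : Line} (hP : G.Thick P) (hQ : G.Thick Q)
    (hPj : G.Inc P j) (hQj : G.Inc Q j) :
    Nat.card {l // G.Inc P l} = Nat.card {l // G.Inc Q l} := by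
  by_cases hPQ : P = Q
  · rw [hPQ]
  obtain ⟨a, hPa, ha⟩ := G.b3 P j
  obtain ⟨b, hQb, hb⟩ := G.b3 Q j
  by_cases hQa : ∀ q, G.Inc Q q → G.Perp q a
  · by_cases hPb : ∀ m, G.Inc P m → G.Perp m b
    · obtain ⟨R, hRb, hRa⟩ := G.b2 b a (hQa b hQb)
      have := G.card_eq_triangle hPQ hP hQ hPj hQj hPa ha hQb hb hPb hQa hRa hRb
      exact this.1.symm.trans this.2
    · push Not at hPb
      obtain ⟨c, hPc, hc⟩ := hPb
      exact (G.card_eq_of_not_pole (Ne.symm hPQ) hP hQj hPj hQb hb hPc hc).symm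
  · push Not at hQa
    obtain ⟨c, hQc, hc⟩ := hQa
    exact G.card_eq_of_not_pole hPQ hQ hPj hQj hPa ha hQc hc

/-- Every point `P` has as many lines as some point of a line `l` with only thick points. -/
lemma exists_card_eq [Finite Point] [Finite Line] {l : Line}
    (hl : ∀ P, G.Inc P l → G.Thick P) (P : Point) :
    ∃ F, G.Inc F l ∧ Nat.card {m // G.Inc P m} = Nat.card {m // G.Inc F m} := by
  by_cases hPl : G.Inc P l
  · exact ⟨P, hPl, rfl⟩
  obtain ⟨g, hPg, hg⟩ := G.b3 P l
  obtain ⟨F, hFg, hFl⟩ := G.b2 g l hg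
  have hF := hl F hFl
  refine ⟨F, hFl, ?_⟩
  by_cases hP : G.Thick P
  · exact G.card_eq_of_thick hP hF hPg hFg
  obtain ⟨n, hPn, hn⟩ := G.b3 P g
  have hng := G.ne_of_perp hn
  have hPF : P ≠ F := by
    rintro rfl
    exact hPl hFl
  have hnl : G.Perp n l := by
    -- `n` is the perpendicular from `P` to a third line `m` through `F`, so `F` is a pole of `n`.
    obtain ⟨m, hFm, hmg, hml⟩ := hF.exists_third g l
    obtain ⟨x, hPx, hx⟩ := G.b3 P m
    have hxg : x ≠ g := by
      rintro rfl
      exact hml (G.perp_unique hFg hFm hFl (G.b1 _ _ hx) (G.b1 _ _ hg))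
    have hxn : x = n :=
      (G.eq_or_eq_of_not_thick hP hng.symm hPg hPn hPx).resolve_left hxg
    subst hxn
    exact G.b1 _ _ (G.perp_of_two hmg hFl hFm hFg (G.b1 _ _ hx) (G.b1 _ _ hn))
  obtain ⟨N, hNn, hNl⟩ := G.b2 n l hnl
  have hN := hl N hNl
  have hFN : F ≠ N := by
    rintro rfl
    exact hng (G.aStar P F hPF n g hPn hNn hPg hFg)
  exact (G.card_eq_triangle hFN hF hN hFl hNl hFg hg hNn hnl
    (fun m hm => G.perp_of_pole hPl hng.symm hPg hPn hg hnl hFg hFl hPn hn hF hm)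
    (fun q hq => G.perp_of_pole hPl hng hPn hPg hnl hg hNn hNl hPg (G.b1 _ _ hn) hN hq)
    hPg hPn).1

end PartialSherkPlane

theorem stmt_14 {Point Line : Type*} [Fintype Point] [Fintype Line]
    (G : PartialSherkPlane Point Line)
    (hthick : ∃ l : Line, ∀ P : Point, G.Inc P l → 3 ≤ Nat.card {m : Line // G.Inc P m}) :
    ∀ P Q : Point, Nat.card {l : Line // G.Inc P l} = Nat.card {l : Line // G.Inc Q l} := by
  obtain ⟨l, hl⟩ := hthick
  intro P Q
  obtain ⟨F, hF, hPF⟩ := G.exists_card_eq hl P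
  obtain ⟨F', hF', hQF⟩ := G.exists_card_eq hl Q
  rw [hPF, hQF]
  exact G.card_eq_of_thick (hl F hF) (hl F' hF') hF hF'
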